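/- arXiv:1601.03174 — 5 statements merged into one kernel-verified Lean document; each statement's English description precedes it below -/
import Mathlib

section
/- Let k ≥ 2 and let G be a d-regular graph on n vertices with d ≥ k−1. Then G contains a clique on k vertices if and only if there exist a vertex set U ⊆ V(G), a set D of edges of G−U, and a set A of unordered pairs of distinct non-adjacent vertices of V(G)∖U, with |U| + |D| + |A| ≤ k(k−1)/2, such that the degree multiset of G−U−D+A consists of n−k copies of d and k copies of d−(k−1). -/
/-- The degree of a vertex, as the `ncard` of its neighbor set. -/
noncomputable def ndeg {V : Type*} (H : SimpleGraph V) (v : V) : ℕ :=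
  (H.neighborSet v).ncard

/-- The graph `G - U - D + A`, obtained from `G` by deleting the vertices of `U`
(together with all incident edges), deleting the edges of `D` and adding the pairs of `A`
as edges. (The deleted vertices become isolated; degrees are only read off `V ∖ U`.) -/
def edit {V : Type*} (G : SimpleGraph V) (U : Finset V) (D A : Set (Sym2 V)) :
    SimpleGraph V :=
  SimpleGraph.fromEdgeSet ((G.edgeSet \ (D ∪ {e : Sym2 V | ∃ u ∈ U, u ∈ e})) ∪ A)

/-!
Deleting the edges of a `k`-clique lowers the degree of its vertices by `k - 1` and changes no
other degree. Conversely, the length of the degree sequence forces `U = ∅`. Each of the `k` vertices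
of low degree then lies on at least `k - 1` pairs of `D`, so counting incidences twice gives
`k * (k - 1) ≤ 2 * |D|`. The budget makes this an equality, so both ends of every pair in `D` have
low degree; hence `D` consists of all pairs of low-degree vertices, and these form a clique.
-/

section

open Finset

variable {V : Type*}

section Pairs

variable [DecidableEq V] {S : Finset V} {D : Finset (Sym2 V)}

/-- The unordered pairs of distinct elements of `S`, i.e. the edges of the complete graph on `S`;
these are the edges to be deleted when `S` is a clique. -/
def pairsIn (S : Finset V) : Finset (Sym2 V) :=
  S.offDiag.image Sym2.mk.uncurry

lemma mk_mem_pairsIn {v w : V} : s(v, w) ∈ pairsIn S ↔ v ∈ S ∧ w ∈ S ∧ v ≠ w := by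
  simp only [pairsIn, mem_image, mem_offDiag, Prod.exists, Function.uncurry_apply_pair, Sym2.eq_iff]
  constructor
  · rintro ⟨a, b, ⟨ha, hb, hab⟩, ⟨rfl, rfl⟩ | ⟨rfl, rfl⟩⟩
    · exact ⟨ha, hb, hab⟩
    · exact ⟨hb, ha, hab.symm⟩
  · exact fun h ↦ ⟨v, w, h, Or.inl ⟨rfl, rfl⟩⟩

lemma two_mul_card_pairsIn (S : Finset V) : 2 * #(pairsIn S) = #S * (#S - 1) := by
  rw [pairsIn, Sym2.two_mul_card_image_offDiag, offDiag_card, Nat.mul_sub_one]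

lemma ncard_setOf_mk_mem (D : Finset (Sym2 V)) (v : V) :
    {w | s(v, w) ∈ D}.ncard = #{e ∈ D | v ∈ e} := by
  have image_eq : (fun w ↦ s(v, w)) '' {w | s(v, w) ∈ D} = ({e ∈ D | v ∈ e} : Finset (Sym2 V)) := by
    ext e
    simp only [Set.mem_image, Set.mem_ofPred_eq, mem_coe, mem_filter]
    constructor
    · rintro ⟨w, hw, rfl⟩
      exact ⟨hw, Sym2.mem_mk_left v w⟩
    · rintro ⟨he, w, rfl⟩
      exact ⟨w, he, rfl⟩
  rw [← Set.ncard_image_of_injective _ (fun _ _ ↦ Sym2.congr_right.1), image_eq,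
    Set.ncard_coe_finset]

lemma card_filter_mem_pairsIn (S : Finset V) (v : V) :
    #{e ∈ pairsIn S | v ∈ e} = if v ∈ S then #S - 1 else 0 := by
  rw [← ncard_setOf_mk_mem]
  simp only [mk_mem_pairsIn]
  split_ifs with hv
  · rw [← card_erase_of_mem hv, ← Set.ncard_coe_finset]
    congr 1
    ext w
    simp [hv, and_comm, eq_comm]
  · simp [hv]

lemma card_filter_mem_sym2_le_two (S : Finset V) (e : Sym2 V) : #{v ∈ S | v ∈ e} ≤ 2 := by
  induction e with | _ a b
  have subset_ends : {v ∈ S | v ∈ s(a, b)} ⊆ {a, b} := fun v hv ↦ by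
    simpa using (mem_filter.1 hv).2
  exact (card_le_card subset_ends).trans card_le_two

lemma mem_pairsIn_of_card_filter_mem_eq_two {e : Sym2 V} (he : #{v ∈ S | v ∈ e} = 2) :
    e ∈ pairsIn S := by
  obtain ⟨a, b, hab, hfilter⟩ := card_eq_two.1 he
  obtain ⟨haS, hae⟩ := mem_filter.1 (hfilter ▸ mem_insert_self a {b})
  obtain ⟨hbS, hbe⟩ := mem_filter.1 (hfilter ▸ mem_insert_of_mem (mem_singleton_self b))
  rw [(Sym2.mem_and_mem_iff hab).1 ⟨hae, hbe⟩]
  exact mk_mem_pairsIn.2 ⟨haS, hbS, hab⟩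

lemma eq_pairsIn_of_card_le (hdeg : ∀ v ∈ S, #S - 1 ≤ #{e ∈ D | v ∈ e})
    (hcard : #D ≤ #(pairsIn S)) : D = pairsIn S := by
  have le_sum : 2 * #(pairsIn S) ≤ ∑ e ∈ D, #{v ∈ S | v ∈ e} :=
    calc 2 * #(pairsIn S) = #S • (#S - 1) := two_mul_card_pairsIn S
      _ ≤ ∑ v ∈ S, #{e ∈ D | v ∈ e} := card_nsmul_le_sum S _ _ hdeg
      _ = ∑ e ∈ D, #{v ∈ S | v ∈ e} :=
        sum_card_bipartiteAbove_eq_sum_card_bipartiteBelow fun v e ↦ v ∈ e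
  have sum_le : ∑ e ∈ D, #{v ∈ S | v ∈ e} ≤ ∑ _e ∈ D, 2 :=
    sum_le_sum fun e _ ↦ card_filter_mem_sym2_le_two S e
  have sum_two : ∑ _e ∈ D, 2 = 2 * #D := by rw [sum_const, smul_eq_mul, mul_comm]
  have both_ends_mem : ∀ e ∈ D, #{v ∈ S | v ∈ e} = 2 :=
    (sum_eq_sum_iff_of_le fun e _ ↦ card_filter_mem_sym2_le_two S e).1 (by omega)
  exact eq_of_subset_of_card_le
    (fun e he ↦ mem_pairsIn_of_card_filter_mem_eq_two (both_ends_mem e he)) (by omega)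

end Pairs

section Edit

variable {G : SimpleGraph V}

lemma edit_adj {U : Finset V} {D A : Set (Sym2 V)} {v w : V} :
    (edit G U D A).Adj v w ↔
      (G.Adj v w ∧ s(v, w) ∉ D ∧ v ∉ U ∧ w ∉ U) ∨ (s(v, w) ∈ A ∧ v ≠ w) := by
  have ne_of_adj : G.Adj v w → v ≠ w := SimpleGraph.Adj.ne
  have incident_iff : (∃ u ∈ U, u ∈ s(v, w)) ↔ v ∈ U ∨ w ∈ U := by aesop
  simp only [edit, SimpleGraph.fromEdgeSet_adj, Set.mem_union, Set.mem_sdiff,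
    SimpleGraph.mem_edgeSet, Set.mem_ofPred_eq, incident_iff]
  tauto

variable [DecidableEq V]

lemma ndeg_le_ndeg_edit_add [Finite V] {U : Finset V} {v : V} (hv : v ∉ U)
    (D : Finset (Sym2 V)) (A : Set (Sym2 V)) :
    ndeg G v ≤ ndeg (edit G U D A) v + #{e ∈ D | v ∈ e} + #U := by
  have neighborSet_subset :
      G.neighborSet v ⊆ (edit G U D A).neighborSet v ∪ {w | s(v, w) ∈ D} ∪ U := by
    intro w (hw : G.Adj v w)
    simp only [Set.mem_union, SimpleGraph.mem_neighborSet, edit_adj, Set.mem_ofPred_eq, mem_coe]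
    tauto
  rw [← ncard_setOf_mk_mem, ← Set.ncard_coe_finset U]
  calc ndeg G v
      ≤ ((edit G U D A).neighborSet v ∪ {w | s(v, w) ∈ D} ∪ U).ncard :=
        Set.ncard_le_ncard neighborSet_subset
    _ ≤ ((edit G U D A).neighborSet v ∪ {w | s(v, w) ∈ D}).ncard + (U : Set V).ncard :=
        Set.ncard_union_le _ _
    _ ≤ ndeg (edit G U D A) v + {w | s(v, w) ∈ D}.ncard + (U : Set V).ncard :=
        Nat.add_le_add_right (Set.ncard_union_le _ _) _

lemma ndeg_edit_of_subset_edgeSet {D : Finset (Sym2 V)} (hD : ↑D ⊆ G.edgeSet) (v : V) :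
    ndeg (edit G ∅ D ∅) v = ndeg G v - #{e ∈ D | v ∈ e} := by
  have neighborSet_eq :
      (edit G ∅ D ∅).neighborSet v = G.neighborSet v \ {w | s(v, w) ∈ D} := by
    ext w
    simp [edit_adj]
  have deleted_finite : {w | s(v, w) ∈ D}.Finite :=
    D.finite_toSet.preimage (fun _ _ _ _ ↦ Sym2.congr_right.1)
  have deleted_subset : {w | s(v, w) ∈ D} ⊆ G.neighborSet v := fun _ hw ↦ hD hw
  rw [ndeg, neighborSet_eq, Set.ncard_sdiff deleted_subset deleted_finite, ncard_setOf_mk_mem, ndeg]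

lemma pairsIn_subset_edgeSet {K : Finset V} (hK : G.IsClique K) : ↑(pairsIn K) ⊆ G.edgeSet := by
  intro e he
  induction e with | _ v w
  obtain ⟨hv, hw, hvw⟩ := mk_mem_pairsIn.1 he
  exact hK hv hw hvw

lemma ndeg_edit_pairsIn {K : Finset V} (hK : G.IsClique K) (v : V) :
    ndeg (edit G ∅ (pairsIn K) ∅) v = if v ∈ K then ndeg G v - (#K - 1) else ndeg G v := by
  rw [ndeg_edit_of_subset_edgeSet (pairsIn_subset_edgeSet hK), card_filter_mem_pairsIn]
  split_ifs <;> simp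

lemma isClique_of_ndeg_edit_add_le [Finite V] {S : Finset V} {D : Finset (Sym2 V)}
    {A : Set (Sym2 V)} (hD : ↑D ⊆ G.edgeSet) (hcard : #D ≤ #(pairsIn S))
    (hdeg : ∀ v ∈ S, ndeg (edit G ∅ D A) v + (#S - 1) ≤ ndeg G v) : G.IsClique S := by
  have incidence_ge : ∀ v ∈ S, #S - 1 ≤ #{e ∈ D | v ∈ e} := fun v hv ↦ by
    have := hdeg v hv
    have := ndeg_le_ndeg_edit_add (G := G) (notMem_empty v) D A
    rw [card_empty] at this
    omega
  obtain rfl := eq_pairsIn_of_card_le incidence_ge hcard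
  exact fun v hv w hw hvw ↦ hD (mk_mem_pairsIn.2 ⟨hv, hw, hvw⟩)

end Edit

section Multisets

variable {α β : Type*}

lemma map_univ_ite_mem [Fintype α] [DecidableEq α] (K : Finset α) (a b : β) :
    (univ : Finset α).val.map (fun x ↦ if x ∈ K then a else b) =
      Multiset.replicate (Fintype.card α - #K) b + Multiset.replicate #K a := by
  have univ_val : (univ : Finset α).val = Kᶜ.val + K.val := by
    rw [← disjUnion_val _ _ disjoint_compl_left, disjUnion_eq_union, union_comm, union_compl]
  have map_compl : ∀ x ∈ Kᶜ, (if x ∈ K then a else b) = b := fun x hx ↦ if_neg (mem_compl.1 hx)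
  have map_mem : ∀ x ∈ K, (if x ∈ K then a else b) = a := fun x hx ↦ if_pos hx
  rw [univ_val, Multiset.map_add, Multiset.map_congr rfl map_compl,
    Multiset.map_congr rfl map_mem, Multiset.map_const', Multiset.map_const',
    card_val, card_val, card_compl]

lemma card_filter_eq_of_map_eq_replicate_add [DecidableEq β] {s : Finset α} {f : α → β} {m k : ℕ}
    {a b : β} (hab : a ≠ b)
    (hmap : s.val.map f = Multiset.replicate m a + Multiset.replicate k b) :
    #{x ∈ s | f x = b} = k := by
  have count_eq := congrArg (Multiset.count b) hmap
  rw [Multiset.count_add, Multiset.count_replicate, Multiset.count_replicate_self, if_neg hab,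
    zero_add, Multiset.count_map] at count_eq
  simpa only [card_def, filter_val, eq_comm] using count_eq

lemma eq_empty_of_map_univ_sdiff_eq_replicate_add [Fintype α] [DecidableEq α] {U : Finset α}
    {f : α → β} {k : ℕ} {a b : β}
    (hmap : (univ \ U).val.map f =
      Multiset.replicate (Fintype.card α - k) a + Multiset.replicate k b) : U = ∅ := by
  have card_eq := congrArg Multiset.card hmap
  rw [Multiset.card_map, Multiset.card_add, Multiset.card_replicate, Multiset.card_replicate,
    card_val, ← compl_eq_univ_sdiff, card_compl] at card_eq
  have := card_le_univ U
  rw [← card_eq_zero]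
  omega

end Multisets

end

theorem clique_iff_edit_to_degree_sequence
    {V : Type*} [Fintype V] [DecidableEq V] (n k d : ℕ) (hk : 2 ≤ k) (hd : k - 1 ≤ d)
    (hn : Fintype.card V = n) (G : SimpleGraph V)
    (hreg : ∀ v : V, ndeg G v = d) :
    (∃ K : Finset V, G.IsNClique k K) ↔
      ∃ (U : Finset V) (D A : Finset (Sym2 V)),
        (∀ e ∈ D, e ∈ G.edgeSet ∧ ∀ u ∈ U, u ∉ e) ∧
        (∀ e ∈ A, ¬ e.IsDiag ∧ e ∉ G.edgeSet ∧ ∀ u ∈ U, u ∉ e) ∧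
        U.card + D.card + A.card ≤ k * (k - 1) / 2 ∧
        ((Finset.univ \ U).val.map fun v => ndeg (edit G U ↑D ↑A) v) =
          Multiset.replicate (n - k) d + Multiset.replicate k (d - (k - 1)) := by
  have card_pairsIn {S : Finset V} (hS : S.card = k) : (pairsIn S).card = k * (k - 1) / 2 := by
    rw [← hS, ← two_mul_card_pairsIn, Nat.mul_div_cancel_left _ two_pos]
  constructor
  · rintro ⟨K, hK, rfl⟩
    refine ⟨∅, pairsIn K, ∅, fun e he ↦ ⟨pairsIn_subset_edgeSet hK he, by simp⟩, by simp,
      by simp [card_pairsIn], ?_⟩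
    simp only [Finset.sdiff_empty, Finset.coe_empty, ndeg_edit_pairsIn hK, hreg, map_univ_ite_mem,
      hn]
  · rintro ⟨U, D, A, hD, -, hcard, hdeg⟩
    subst hn
    obtain rfl := eq_empty_of_map_univ_sdiff_eq_replicate_add hdeg
    have low_card := card_filter_eq_of_map_eq_replicate_add (by omega) hdeg
    refine ⟨_, isClique_of_ndeg_edit_add_le (A := A) (fun e he ↦ (hD e he).1) ?_ ?_, low_card⟩
    · rw [card_pairsIn low_card]
      omega
    · intro v hv
      rw [low_card, (Finset.mem_filter.1 hv).2, hreg, Nat.sub_add_cancel hd]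
end

section
/- Let 2 ≤ k ≤ n and let G be a d-regular graph on n vertices. Then G contains an independent set of k vertices if and only if there exist a vertex set U ⊆ V(G), a set D of edges of G−U, and a set A of unordered pairs of distinct non-adjacent vertices of V(G)∖U, with |U| + |D| + |A| ≤ k(k−1)/2, such that the degree multiset of G−U−D+A consists of k copies of d+(k−1) and n−k copies of d. -/
/-!
Joining all pairs of an independent `k`-set costs `k.choose 2` additions and raises exactly its
degrees, each by `k - 1`. Conversely, the target multiset has `n` entries, so no vertex is deleted;
the `k` vertices of degree `d + (k - 1)` each lie on at least `k - 1` added pairs. Since there are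
at most `k.choose 2` added pairs, the handshake identity forces them to form a clique on these `k`
vertices, and added pairs are non-edges of `G`.
-/

open SimpleGraph

section Degree

variable {V : Type*} {G H : SimpleGraph V}

theorem ndeg_eq_degree (G : SimpleGraph V) (v : V) [Fintype (G.neighborSet v)] :
    ndeg G v = G.degree v := by
  rw [ndeg, Set.ncard_eq_toFinset_card', ← neighborFinset_def, card_neighborFinset_eq_degree]

theorem ndeg_sup_le (G H : SimpleGraph V) (v : V) : ndeg (G ⊔ H) v ≤ ndeg G v + ndeg H v :=
  Set.ncard_union_le (G.neighborSet v) (H.neighborSet v)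

variable [Finite V]

theorem ndeg_mono (h : G ≤ H) (v : V) : ndeg G v ≤ ndeg H v :=
  Set.ncard_le_ncard fun _ hw => h hw

theorem ndeg_sup_of_disjoint (h : Disjoint G H) (v : V) :
    ndeg (G ⊔ H) v = ndeg G v + ndeg H v :=
  Set.ncard_union_eq <| Set.disjoint_left.mpr fun _ hG hH => disjoint_left.mp h _ _ hG hH

end Degree

section Edit

variable {V : Type*} (G : SimpleGraph V)

theorem edit_empty_left (D A : Set (Sym2 V)) :
    edit G ∅ D A = G.deleteEdges D ⊔ fromEdgeSet A := by
  simp [edit, deleteEdges]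

variable [Finite V]

theorem ndeg_edit_empty_left_le (D A : Set (Sym2 V)) (v : V) :
    ndeg (edit G ∅ D A) v ≤ ndeg G v + ndeg (fromEdgeSet A) v := by
  rw [edit_empty_left]
  exact (ndeg_sup_le _ _ v).trans (Nat.add_le_add_right (ndeg_mono (deleteEdges_le D) v) _)

variable {G}

theorem ndeg_edit_empty_empty {A : Set (Sym2 V)} (hA : Disjoint G.edgeSet A) (v : V) :
    ndeg (edit G ∅ ∅ A) v = ndeg G v + ndeg (fromEdgeSet A) v := by
  rw [edit_empty_left, deleteEdges_empty, ndeg_sup_of_disjoint ((disjoint_fromEdgeSet G A).mpr hA)]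

end Edit

section Clique

variable {V : Type*} [Fintype V] {H : SimpleGraph V} [DecidableRel H.Adj] {S : Finset V}

theorem support_subset_of_two_mul_card_edgeFinset_le_sum_degree
    (h : 2 * H.edgeFinset.card ≤ ∑ v ∈ S, H.degree v) : H.support ⊆ S := by
  classical
  have sum_compl : ∑ v ∈ Sᶜ, H.degree v = 0 := by
    have := H.sum_degrees_eq_twice_card_edges
    have := Finset.sum_add_sum_compl S fun v => H.degree v
    omega
  intro v hv
  by_contra hvS
  exact ((H.degree_pos_iff_mem_support v).mpr hv).ne'
    (Finset.sum_eq_zero_iff.mp sum_compl v (Finset.mem_compl.mpr hvS))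

theorem isClique_of_support_subset_of_le_degree (hsupp : H.support ⊆ S)
    (hdeg : ∀ v ∈ S, S.card - 1 ≤ H.degree v) : H.IsClique S := by
  classical
  intro u hu v hv huv
  have neighbors_subset : H.neighborFinset u ⊆ S.erase u := fun w hw => by
    rw [mem_neighborFinset] at hw
    exact Finset.mem_erase.mpr ⟨hw.ne', hsupp ⟨u, hw.symm⟩⟩
  have neighbors_eq : H.neighborFinset u = S.erase u := by
    refine Finset.eq_of_subset_of_card_le neighbors_subset ?_
    rw [Finset.card_erase_of_mem hu, card_neighborFinset_eq_degree]
    exact hdeg u hu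
  rw [← mem_neighborFinset, neighbors_eq]
  exact Finset.mem_erase.mpr ⟨huv.symm, hv⟩

theorem isClique_of_card_edgeFinset_le_choose_two
    (hdeg : ∀ v ∈ S, S.card - 1 ≤ H.degree v)
    (hcard : H.edgeFinset.card ≤ S.card.choose 2) : H.IsClique S := by
  refine isClique_of_support_subset_of_le_degree
    (support_subset_of_two_mul_card_edgeFinset_le_sum_degree ?_) hdeg
  calc 2 * H.edgeFinset.card
      ≤ 2 * S.card.choose 2 := Nat.mul_le_mul_left 2 hcard
    _ = S.card * (S.card - 1) := by
        rw [Nat.choose_two_right, Nat.two_mul_div_two_of_even (Nat.even_mul_pred_self _)]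
    _ ≤ ∑ v ∈ S, H.degree v := Finset.card_nsmul_le_sum S _ _ hdeg

end Clique

theorem card_edgeFinset_fromEdgeSet_le {V : Type*} (A : Finset (Sym2 V))
    [Fintype (fromEdgeSet (A : Set (Sym2 V))).edgeSet] :
    (fromEdgeSet (A : Set (Sym2 V))).edgeFinset.card ≤ A.card := by
  refine Finset.card_le_card fun e he => ?_
  rw [mem_edgeFinset, edgeSet_fromEdgeSet] at he
  exact he.1

theorem isIndepSet_of_add_card_sub_one_le_ndeg_edit {V : Type*} [Finite V] {G : SimpleGraph V}
    {S : Finset V} {D : Set (Sym2 V)} {A : Finset (Sym2 V)}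
    (hA : Disjoint G.edgeSet A) (hcard : A.card ≤ S.card.choose 2)
    (hdeg : ∀ v ∈ S, ndeg G v + (S.card - 1) ≤ ndeg (edit G ∅ D A) v) : G.IsIndepSet S := by
  have := Fintype.ofFinite V
  have := Classical.decRel (fromEdgeSet (A : Set (Sym2 V))).Adj
  have clique : (fromEdgeSet (A : Set (Sym2 V))).IsClique S := by
    refine isClique_of_card_edgeFinset_le_choose_two (fun v hv => ?_)
      ((card_edgeFinset_fromEdgeSet_le A).trans hcard)
    rw [← ndeg_eq_degree]
    exact Nat.add_le_add_iff_left.mp ((hdeg v hv).trans (ndeg_edit_empty_left_le G D A v))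
  intro u hu v hv huv hadj
  exact Set.disjoint_left.mp hA hadj ((fromEdgeSet_adj _).mp (clique hu hv huv)).1

section DistinctPairs

variable {V : Type*} [DecidableEq V] {S : Finset V} {v w : V}

/-- The unordered pairs of distinct elements of `S`, that is, the edges of the complete graph on
`S`; these are the pairs added to `G` when `S` is independent. -/
def distinctPairs (S : Finset V) : Finset (Sym2 V) :=
  S.offDiag.image Sym2.mk.uncurry

@[simp]
theorem mk_mem_distinctPairs : s(v, w) ∈ distinctPairs S ↔ v ∈ S ∧ w ∈ S ∧ v ≠ w := by
  simp only [distinctPairs, Finset.mem_image, Finset.mem_offDiag, Prod.exists, Function.uncurry,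
    Sym2.eq_iff]
  grind

theorem card_distinctPairs (S : Finset V) : (distinctPairs S).card = S.card.choose 2 :=
  Sym2.card_image_offDiag S

theorem not_isDiag_of_mem_distinctPairs {e : Sym2 V} (he : e ∈ distinctPairs S) :
    ¬ e.IsDiag := by
  induction e with
  | _ v w => exact (mk_mem_distinctPairs.mp he).2.2

theorem disjoint_edgeSet_distinctPairs {G : SimpleGraph V} (hS : G.IsIndepSet S) :
    Disjoint G.edgeSet (distinctPairs S) := by
  refine Set.disjoint_left.mpr fun e hG he => ?_
  induction e with
  | _ v w =>
    obtain ⟨hv, hw, hvw⟩ := mk_mem_distinctPairs.mp he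
    exact hS hv hw hvw hG

theorem ndeg_fromEdgeSet_distinctPairs_of_mem (hv : v ∈ S) :
    ndeg (fromEdgeSet (distinctPairs S : Set (Sym2 V))) v = S.card - 1 := by
  have neighbors : (fromEdgeSet (distinctPairs S : Set (Sym2 V))).neighborSet v = S.erase v := by
    ext w
    simp only [mem_neighborSet, fromEdgeSet_adj, Finset.mem_coe, mk_mem_distinctPairs,
      Finset.mem_erase]
    grind
  rw [ndeg, neighbors, Set.ncard_coe_finset, Finset.card_erase_of_mem hv]

theorem ndeg_fromEdgeSet_distinctPairs_of_notMem (hv : v ∉ S) :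
    ndeg (fromEdgeSet (distinctPairs S : Set (Sym2 V))) v = 0 := by
  have neighbors : (fromEdgeSet (distinctPairs S : Set (Sym2 V))).neighborSet v = ∅ := by
    ext w
    simp [hv]
  rw [ndeg, neighbors, Set.ncard_empty]

end DistinctPairs

section TwoValued

variable {α β : Type*} [Fintype α] {f : α → β} {a b : β}

theorem map_univ_val_eq_replicate_add_replicate {S : Finset α}
    (ha : ∀ x ∈ S, f x = a) (hb : ∀ x ∉ S, f x = b) :
    Finset.univ.val.map f =
      Multiset.replicate S.card a + Multiset.replicate (Fintype.card α - S.card) b := by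
  classical
  have split : (Finset.univ : Finset α).val = S.val + Sᶜ.val := by
    rw [← Finset.disjUnion_val S Sᶜ disjoint_compl_right, Finset.disjUnion_eq_union,
      Finset.union_compl]
  rw [split, Multiset.map_add, Multiset.map_congr rfl ha,
    Multiset.map_congr rfl fun x hx => hb x (Finset.mem_compl.mp hx), Multiset.map_const',
    Multiset.map_const', Finset.card_val, Finset.card_val, Finset.card_compl]

theorem exists_card_eq_of_map_univ_val_eq {k m : ℕ} (hab : a ≠ b)
    (h : Finset.univ.val.map f = Multiset.replicate k a + Multiset.replicate m b) :
    ∃ S : Finset α, S.card = k ∧ ∀ x ∈ S, f x = a := by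
  classical
  refine ⟨Finset.univ.filter (a = f ·), ?_, fun x hx => (Finset.mem_filter.mp hx).2.symm⟩
  have count_eq := congrArg (Multiset.count a) h
  rwa [Multiset.count_map, Multiset.count_add, Multiset.count_replicate_self,
    Multiset.count_replicate, if_neg hab.symm, add_zero] at count_eq

end TwoValued

theorem eq_empty_of_card_le_card_univ_sdiff {α : Type*} [Fintype α] [DecidableEq α] {U : Finset α}
    (h : Fintype.card α ≤ (Finset.univ \ U).card) : U = ∅ := by
  have := Finset.card_le_univ U
  rw [Finset.card_univ_sdiff] at h
  exact Finset.card_eq_zero.mp (by omega)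

section Regular

variable {V : Type*} [Fintype V] {G : SimpleGraph V} {d : ℕ}

theorem map_ndeg_edit_distinctPairs [DecidableEq V] (hreg : ∀ v, ndeg G v = d) {S : Finset V}
    (hS : G.IsIndepSet S) :
    (Finset.univ.val.map fun v => ndeg (edit G ∅ ∅ (distinctPairs S)) v) =
      Multiset.replicate S.card (d + (S.card - 1)) +
        Multiset.replicate (Fintype.card V - S.card) d := by
  simp only [ndeg_edit_empty_empty (disjoint_edgeSet_distinctPairs hS), hreg]
  refine map_univ_val_eq_replicate_add_replicate (fun v hv => ?_) (fun v hv => ?_)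
  · rw [ndeg_fromEdgeSet_distinctPairs_of_mem hv]
  · rw [ndeg_fromEdgeSet_distinctPairs_of_notMem hv, add_zero]

theorem exists_isIndepSet_of_map_ndeg_edit (hreg : ∀ v, ndeg G v = d) {k m : ℕ} (hk : 2 ≤ k)
    {D : Set (Sym2 V)} {A : Finset (Sym2 V)} (hA : Disjoint G.edgeSet A)
    (hcard : A.card ≤ k.choose 2)
    (hmap : (Finset.univ.val.map fun v => ndeg (edit G ∅ D A) v) =
      Multiset.replicate k (d + (k - 1)) + Multiset.replicate m d) :
    ∃ S : Finset V, S.card = k ∧ G.IsIndepSet S := by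
  obtain ⟨S, rfl, hdeg⟩ := exists_card_eq_of_map_univ_val_eq (by omega) hmap
  refine ⟨S, rfl, isIndepSet_of_add_card_sub_one_le_ndeg_edit (D := D) hA hcard fun v hv => ?_⟩
  rw [hreg, hdeg v hv]

end Regular

theorem indepSet_iff_edit_to_degree_sequence
    {V : Type*} [Fintype V] [DecidableEq V] (n k d : ℕ) (hk : 2 ≤ k) (hkn : k ≤ n)
    (hn : Fintype.card V = n) (G : SimpleGraph V)
    (hreg : ∀ v : V, ndeg G v = d) :
    (∃ S : Finset V, S.card = k ∧ ∀ u ∈ S, ∀ v ∈ S, u ≠ v → ¬ G.Adj u v) ↔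
      ∃ (U : Finset V) (D A : Finset (Sym2 V)),
        (∀ e ∈ D, e ∈ G.edgeSet ∧ ∀ u ∈ U, u ∉ e) ∧
        (∀ e ∈ A, ¬ e.IsDiag ∧ e ∉ G.edgeSet ∧ ∀ u ∈ U, u ∉ e) ∧
        U.card + D.card + A.card ≤ k * (k - 1) / 2 ∧
        ((Finset.univ \ U).val.map fun v => ndeg (edit G U ↑D ↑A) v) =
          Multiset.replicate k (d + (k - 1)) + Multiset.replicate (n - k) d := by
  subst hn
  constructor
  · rintro ⟨S, rfl, hS⟩
    have hindep : G.IsIndepSet S := fun u hu v hv => hS u hu v hv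
    refine ⟨∅, ∅, distinctPairs S, by simp, fun e he => ⟨?_, ?_, by simp⟩, ?_, ?_⟩
    · exact not_isDiag_of_mem_distinctPairs he
    · exact Set.disjoint_right.mp (disjoint_edgeSet_distinctPairs hindep) he
    · simp [card_distinctPairs, Nat.choose_two_right]
    · simpa using map_ndeg_edit_distinctPairs hreg hindep
  · rintro ⟨U, D, A, -, hA, hcard, hmap⟩
    obtain rfl : U = ∅ := by
      have card_eq := congrArg Multiset.card hmap
      rw [Multiset.card_map, Finset.card_val, Multiset.card_add, Multiset.card_replicate,
        Multiset.card_replicate] at card_eq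
      exact eq_empty_of_card_le_card_univ_sdiff (by omega)
    rw [Finset.sdiff_empty] at hmap
    have hdisj : Disjoint G.edgeSet A := Set.disjoint_right.mpr fun e he => (hA e he).2.1
    obtain ⟨S, hSk, hS⟩ := exists_isIndepSet_of_map_ndeg_edit hreg hk hdisj
      (by rw [Nat.choose_two_right]; omega) hmap
    exact ⟨S, hSk, fun u hu v hv => hS hu hv⟩
end

section
/- Let k ≥ 2, let G be a d-regular graph, and let D be a set of edges of G with |D| ≤ k(k−1)/2. If in the graph G−D exactly k vertices have degree d−(k−1) and every other vertex has degree d, then |D| = k(k−1)/2 and D is exactly the set of all unordered pairs of those k vertices; in particular, these k vertices form a clique on k vertices in G. -/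
/-!
The deleted edges form a graph `K` in which the degree of a vertex is the degree lost under the
deletion. Vertices outside `T` lose nothing, so `K` lives on `T`; there each vertex has at most
`#T - 1` possible neighbors, and losing that many degrees forces it to be adjacent in `K` to every
other vertex of `T`.
-/

section

variable {V : Type*} {G H : SimpleGraph V} {T : Finset V} {v : V}

lemma ndeg_sdiff_add_ndeg (hHG : H ≤ G) (hfin : (G.neighborSet v).Finite) :
    ndeg (G \ H) v + ndeg H v = ndeg G v := by
  have hsub : H.neighborSet v ⊆ G.neighborSet v := fun _ hw => hHG hw
  rw [ndeg, SimpleGraph.neighborSet_sdiff]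
  exact Set.ncard_sdiff_add_ncard_of_subset hsub hfin

lemma notMem_support_of_ndeg_eq_zero (hfin : (G.neighborSet v).Finite) (hv : ndeg G v = 0) :
    v ∉ G.support := by
  rw [SimpleGraph.notMem_support_iff_isIsolated, ← SimpleGraph.neighborSet_eq_empty]
  exact (Set.ncard_eq_zero hfin).mp hv

lemma neighborSet_eq_sdiff_singleton_of_support_subset (hsupp : G.support ⊆ T) (hv : v ∈ T)
    (hdeg : T.card ≤ ndeg G v + 1) : G.neighborSet v = (T : Set V) \ {v} := by
  have hsub : G.neighborSet v ⊆ (T : Set V) \ {v} :=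
    fun _ hw => ⟨hsupp hw.mem_support_right, hw.ne'⟩
  have hcard : ((T : Set V) \ {v}).ncard ≤ (G.neighborSet v).ncard := by
    rw [Set.ncard_sdiff_singleton_of_mem hv, Set.ncard_coe_finset]
    exact Nat.sub_le_of_le_add hdeg
  exact Set.eq_of_subset_of_ncard_le hsub hcard T.finite_toSet.sdiff

lemma edgeSet_eq_of_support_subset_of_le_ndeg (hsupp : G.support ⊆ T)
    (hdeg : ∀ v ∈ T, T.card ≤ ndeg G v + 1) :
    G.edgeSet = {e | ¬ e.IsDiag ∧ ∀ v ∈ e, v ∈ T} := by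
  ext e
  induction e with
  | h v w =>
    simp only [SimpleGraph.mem_edgeSet, Set.mem_ofPred_eq, Sym2.mk_isDiag_iff, Sym2.mem_iff,
      forall_eq_or_imp, forall_eq]
    constructor
    · exact fun hvw => ⟨hvw.ne, hsupp hvw.mem_support_left, hsupp hvw.mem_support_right⟩
    · rintro ⟨hne, hv, hw⟩
      rw [← SimpleGraph.mem_neighborSet,
        neighborSet_eq_sdiff_singleton_of_support_subset hsupp hv (hdeg v hv)]
      exact ⟨hw, Ne.symm hne⟩

lemma ncard_setOf_not_isDiag_and_forall_mem (T : Finset V) :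
    {e : Sym2 V | ¬ e.IsDiag ∧ ∀ v ∈ e, v ∈ T}.ncard = T.card.choose 2 := by
  classical
  have hpairs : {e : Sym2 V | ¬ e.IsDiag ∧ ∀ v ∈ e, v ∈ T} =
      (T.offDiag.image Sym2.mk.uncurry : Finset (Sym2 V)) := by
    ext e
    rw [← Sym2.filter_image_mk_not_isDiag, ← Finset.sym2_eq_image]
    simp only [Set.mem_ofPred_eq, Finset.coe_filter, Finset.mem_sym2_iff, and_comm]
  rw [hpairs, Set.ncard_coe_finset, Sym2.card_image_offDiag]

end

theorem edgeDeletion_to_degree_sequence_gives_clique_general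
    {V : Type*} (G : SimpleGraph V) [G.LocallyFinite]
    (D : Set (Sym2 V)) (hDE : D ⊆ G.edgeSet) (T : Finset V)
    (hdegT : ∀ v ∈ T, ndeg (G.deleteEdges D) v + T.card ≤ ndeg G v + 1)
    (hdegnT : ∀ v ∉ T, ndeg (G.deleteEdges D) v = ndeg G v) :
    D.ncard = T.card.choose 2 ∧
    D = {e | ¬ e.IsDiag ∧ ∀ v ∈ e, v ∈ T} ∧
    G.IsClique T := by
  let K := G \ G.deleteEdges D
  have hKD : K.edgeSet = D := by
    rw [SimpleGraph.edgeSet_sdiff, SimpleGraph.edgeSet_deleteEdges, sdiff_sdiff_eq_self hDE]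
  have hlost (v : V) : ndeg K v + ndeg (G.deleteEdges D) v = ndeg G v :=
    ndeg_sdiff_add_ndeg (G.deleteEdges_le D) (Set.toFinite _)
  have hsupp : K.support ⊆ T := fun v hvK => by
    by_contra hvT
    have hfin : (K.neighborSet v).Finite :=
      (Set.toFinite (G.neighborSet v)).subset fun _ hw => hw.1
    exact notMem_support_of_ndeg_eq_zero hfin (by linarith [hlost v, hdegnT v hvT]) hvK
  have hD : D = {e | ¬ e.IsDiag ∧ ∀ v ∈ e, v ∈ T} := by
    rw [← hKD]
    exact edgeSet_eq_of_support_subset_of_le_ndeg hsupp fun v hv => by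
      linarith [hlost v, hdegT v hv]
  have hclique : G.IsClique T := fun v hv w hw hne => by
    have hvwD : s(v, w) ∈ D := by simpa [hD, hne] using And.intro hv hw
    exact hDE hvwD
  exact ⟨hD ▸ ncard_setOf_not_isDiag_and_forall_mem T, hD, hclique⟩

theorem edgeDeletion_to_degree_sequence_gives_clique
    {V : Type*} [Fintype V] (G : SimpleGraph V) (k d : ℕ) (hk : 2 ≤ k)
    (hreg : ∀ v : V, ndeg G v = d)
    (D : Finset (Sym2 V)) (hDE : ↑D ⊆ G.edgeSet) (hDcard : D.card ≤ k * (k - 1) / 2)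
    (T : Finset V) (hT : T.card = k)
    (hdegT : ∀ v ∈ T, (ndeg (G.deleteEdges ↑D) v : ℤ) = (d : ℤ) - ((k : ℤ) - 1))
    (hdegnT : ∀ v ∉ T, ndeg (G.deleteEdges ↑D) v = d) :
    D.card = k * (k - 1) / 2 ∧
    (∀ e : Sym2 V, e ∈ D ↔ ¬ e.IsDiag ∧ ∀ v ∈ e, v ∈ T) ∧
    G.IsNClique k T := by
  classical
  obtain ⟨hcard, hD, hclique⟩ := edgeDeletion_to_degree_sequence_gives_clique_general G D hDE T
    (fun v hv => by have := hdegT v hv; have := hreg v; lia)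
    (fun v hv => (hdegnT v hv).trans (hreg v).symm)
  rw [Set.ncard_coe_finset, hT, Nat.choose_two_right] at hcard
  exact ⟨hcard, Set.ext_iff.mp hD, hclique, hT⟩
end

section
/- Let k ≥ 2, let G be a d-regular graph, and let A be a set of unordered pairs of distinct non-adjacent vertices of G with |A| ≤ k(k−1)/2. If in the graph G+A exactly k vertices have degree d+(k−1) and every other vertex has degree d, then |A| = k(k−1)/2, A is exactly the set of all unordered pairs of those k vertices, and these k vertices form an independent set of size k in G. -/
/-!
The added pairs form a graph `H` sharing no edge with `G`, so degrees in `G ⊔ H` are sums and the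
degree of a vertex in `H` is its increment: zero off `T` and `#T - 1` on `T`. The first confines
the edges of `H` to `T`, where a vertex has only `#T - 1` possible neighbours; the second says that
all of them occur. So `H` is the complete graph on `T`, and `G`, being disjoint from it, has no edge
inside `T`.
-/

open Finset SimpleGraph

section

variable {V : Type*} {G H : SimpleGraph V} {T : Finset V} {v : V}

lemma ndeg_sup_of_disjoint_s4 (hGH : Disjoint G H) (hG : (G.neighborSet v).Finite)
    (hH : (H.neighborSet v).Finite) : ndeg (G ⊔ H) v = ndeg G v + ndeg H v := by
  rw [ndeg, neighborSet_sup, Set.ncard_union_eq (disjoint_neighborSet.mpr hGH v) hG hH, ndeg, ndeg]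

lemma finite_neighborSet_fromEdgeSet {s : Set (Sym2 V)} (hs : s.Finite) (v : V) :
    ((fromEdgeSet s).neighborSet v).Finite :=
  (hs.preimage fun _ _ _ _ h ↦ Sym2.congr_right.mp h).subset
    fun _ hw ↦ ((fromEdgeSet_adj s).mp hw).1

lemma support_subset_of_ndeg_eq_zero {s : Set V} (hfin : ∀ v ∉ s, (H.neighborSet v).Finite)
    (hdeg : ∀ v ∉ s, ndeg H v = 0) : H.support ⊆ s := by
  rintro v ⟨w, hvw⟩
  by_contra hv
  have hempty : H.neighborSet v = ∅ := (Set.ncard_eq_zero (hfin v hv)).mp (hdeg v hv)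
  exact Set.eq_empty_iff_forall_notMem.mp hempty w hvw

lemma isClique_of_support_subset_of_le_ndeg (hsupp : H.support ⊆ T)
    (hdeg : ∀ v ∈ T, #T - 1 ≤ ndeg H v) : H.IsClique T := by
  classical
  intro u hu v hv huv
  have hsub : H.neighborSet u ⊆ T.erase u := fun w (hw : H.Adj u w) ↦
    mem_erase.mpr ⟨hw.ne', hsupp ⟨u, hw.symm⟩⟩
  have hcard : (T.erase u : Set V).ncard ≤ (H.neighborSet u).ncard := by
    rw [Set.ncard_coe_finset, card_erase_of_mem hu]
    exact hdeg u hu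
  have heq : H.neighborSet u = T.erase u := Set.eq_of_subset_of_ncard_le hsub hcard
  exact heq.superset (mem_erase.mpr ⟨huv.symm, hv⟩)

lemma mem_edgeSet_iff_of_support_subset_of_isClique {s : Set V} (hsupp : H.support ⊆ s)
    (hclique : H.IsClique s) (e : Sym2 V) : e ∈ H.edgeSet ↔ ¬ e.IsDiag ∧ ∀ v ∈ e, v ∈ s := by
  induction e with | _ u v
  simp only [mem_edgeSet, Sym2.mk_isDiag_iff, Sym2.mem_iff, forall_eq_or_imp, forall_eq]
  exact ⟨fun h ↦ ⟨h.ne, hsupp ⟨v, h⟩, hsupp ⟨u, h.symm⟩⟩, fun ⟨hne, hu, hv⟩ ↦ hclique hu hv hne⟩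

lemma isIndepSet_of_disjoint_of_isClique {s : Set V} (hGH : Disjoint G H) (hclique : H.IsClique s) :
    G.IsIndepSet s :=
  fun u hu v hv huv hG ↦ SimpleGraph.disjoint_left.mp hGH u v hG (hclique hu hv huv)

lemma card_eq_choose_two_of_mem_iff {A : Finset (Sym2 V)}
    (hA : ∀ e, e ∈ A ↔ ¬ e.IsDiag ∧ ∀ v ∈ e, v ∈ T) : #A = (#T).choose 2 := by
  classical
  have hfilter : A = {e ∈ T.sym2 | ¬ e.IsDiag} := by
    ext e
    rw [hA, mem_filter, mem_sym2_iff, and_comm]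
  rw [hfilter, sym2_eq_image, Sym2.filter_image_mk_not_isDiag, Sym2.card_image_offDiag]

end

theorem edgeAddition_to_degree_sequence_gives_indepSet_general
    {V : Type*} (G : SimpleGraph V) (hfin : ∀ v, (G.neighborSet v).Finite)
    (A : Finset (Sym2 V)) (hA : ∀ e ∈ A, ¬ e.IsDiag ∧ e ∉ G.edgeSet) (T : Finset V)
    (hdegT : ∀ v ∈ T, ndeg (G ⊔ fromEdgeSet ↑A) v = ndeg G v + (#T - 1))
    (hdegnT : ∀ v ∉ T, ndeg (G ⊔ fromEdgeSet ↑A) v = ndeg G v) :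
    #A = #T * (#T - 1) / 2 ∧
    (∀ e : Sym2 V, e ∈ A ↔ ¬ e.IsDiag ∧ ∀ v ∈ e, v ∈ T) ∧
    (∀ u ∈ T, ∀ v ∈ T, u ≠ v → ¬ G.Adj u v) := by
  set H : SimpleGraph V := fromEdgeSet ↑A
  have hedge (e : Sym2 V) : e ∈ H.edgeSet ↔ e ∈ A := by
    rw [edgeSet_fromEdgeSet]
    exact ⟨fun he ↦ he.1, fun he ↦ ⟨he, (hA e he).1⟩⟩
  have hdisj : Disjoint G H :=
    (disjoint_fromEdgeSet ..).mpr (Set.disjoint_right.mpr fun e he ↦ (hA e he).2)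
  have hfinH : ∀ v, (H.neighborSet v).Finite := finite_neighborSet_fromEdgeSet A.finite_toSet
  have hsum (v : V) : ndeg (G ⊔ H) v = ndeg G v + ndeg H v :=
    ndeg_sup_of_disjoint_s4 hdisj (hfin v) (hfinH v)
  have hsupp : H.support ⊆ T := support_subset_of_ndeg_eq_zero (fun v _ ↦ hfinH v)
    fun v hv ↦ Nat.add_eq_left.mp ((hsum v).symm.trans (hdegnT v hv))
  have hclique : H.IsClique T := isClique_of_support_subset_of_le_ndeg hsupp
    fun v hv ↦ (Nat.add_left_cancel ((hsum v).symm.trans (hdegT v hv))).ge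
  have hmem (e : Sym2 V) : e ∈ A ↔ ¬ e.IsDiag ∧ ∀ v ∈ e, v ∈ T :=
    (hedge e).symm.trans (mem_edgeSet_iff_of_support_subset_of_isClique hsupp hclique e)
  refine ⟨?_, hmem, fun u hu v hv ↦ isIndepSet_of_disjoint_of_isClique hdisj hclique hu hv⟩
  rw [card_eq_choose_two_of_mem_iff hmem, Nat.choose_two_right]

theorem edgeAddition_to_degree_sequence_gives_indepSet
    {V : Type*} [Fintype V] (G : SimpleGraph V) (k d : ℕ) (hk : 2 ≤ k)
    (hreg : ∀ v : V, ndeg G v = d)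
    (A : Finset (Sym2 V)) (hA : ∀ e ∈ A, ¬ e.IsDiag ∧ e ∉ G.edgeSet)
    (hAcard : A.card ≤ k * (k - 1) / 2)
    (T : Finset V) (hT : T.card = k)
    (hdegT : ∀ v ∈ T, ndeg (G ⊔ SimpleGraph.fromEdgeSet ↑A) v = d + (k - 1))
    (hdegnT : ∀ v ∉ T, ndeg (G ⊔ SimpleGraph.fromEdgeSet ↑A) v = d) :
    A.card = k * (k - 1) / 2 ∧
    (∀ e : Sym2 V, e ∈ A ↔ ¬ e.IsDiag ∧ ∀ v ∈ e, v ∈ T) ∧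
    (∀ u ∈ T, ∀ v ∈ T, u ≠ v → ¬ G.Adj u v) := by
  subst hT
  exact edgeAddition_to_degree_sequence_gives_indepSet_general G (fun _ ↦ Set.toFinite _) A hA T
    (by simpa only [hreg] using hdegT) (by simpa only [hreg] using hdegnT)
end

section
/- Let G be a graph whose vertex set is partitioned into three sets R_v, Y_v, B_v and whose edge set is partitioned into two sets R_e, B_e. Let L = R_e ∪ {e ∈ E(G) : e is incident to a vertex of R_v} ∪ {uv ∈ E(G) : u, v ∈ Y_v}, and let H = G[L] with connected components H_1, …, H_s. Suppose R_v* ⊆ R_v, Y_v* ⊆ Y_v and R_e* ⊆ R_e satisfy: (iii) if u, v ∈ R_v ∪ Y_v and uv ∈ E(G), then u ∈ R_v* ∪ Y_v* if and only if v ∈ R_v* ∪ Y_v*; (iv) if u ∈ R_v ∪ Y_v and uv ∈ R_e, then u ∈ R_v* ∪ Y_v* if and only if uv ∈ R_e*; (v) if uv, vw ∈ R_e, then uv ∈ R_e* if and only if vw ∈ R_e*; (vi) if u, v are distinct vertices of R_v with a common neighbor in G, then u ∈ R_v* if and only if v ∈ R_v*; (vii) if u ∈ R_v and vw ∈ R_e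 with v a neighbor of u in G, then u ∈ R_v* if and only if vw ∈ R_e*. Then for every component H_i that contains a vertex of R_v* ∪ Y_v* or an edge of R_e*, it holds that V(H_i) ∩ R_v ⊆ R_v*, V(H_i) ∩ Y_v ⊆ Y_v*, and E(H_i) ∩ R_e ⊆ R_e*. -/
/-!
Call the vertices of `R ∪ Y` and the edges in `E` coloured. From a vertex `x` look at `x` itself,
the coloured edges at `x` and the neighbours of `x` in `R`; call `x` saturated when every coloured
object among these is marked. Coherence of the marking says that a single marked object among them
already makes `x` saturated. Each of the three kinds of edges `xy` of `H` carries such a witness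
from a saturated `x` to `y`, so saturation spreads over the whole connected component.
-/

theorem mem_union_iff_left_of_disjoint {α : Type*} {A B s t : Set α} {a : α}
    (hAB : Disjoint A B) (ht : t ⊆ B) (ha : a ∈ A) : a ∈ s ∪ t ↔ a ∈ s :=
  or_iff_left fun hat => hAB.notMem_of_mem_left ha (ht hat)

section Marking

variable {V : Type*}

/-- The graph `H = G[L]`, where `L` consists of the edges in `E`, the edges of `G` meeting `R` and
the edges of `G` inside `Y`. It is kept on the vertex set `V`, so a vertex outside `G[L]` is an
isolated component. -/
def linkGraph (G : SimpleGraph V) (R Y : Set V) (E : Set (Sym2 V)) : SimpleGraph V :=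
  SimpleGraph.fromEdgeSet
    (E ∪ {e ∈ G.edgeSet | ∃ u ∈ R, u ∈ e} ∪ {e ∈ G.edgeSet | ∀ u ∈ e, u ∈ Y})

/-- Conditions (iii)–(vii) on a set `M` of marked vertices and a set `F` of marked edges. The marked
vertices of both colours are collected in the single set `M`, which stands for `R_v* ∪ Y_v*`. -/
structure IsCoherentMarking (G : SimpleGraph V) (R Y : Set V) (E : Set (Sym2 V))
    (M : Set V) (F : Set (Sym2 V)) : Prop where
  vertices_subset : M ⊆ R ∪ Y
  edges_subset : F ⊆ E
  mem_iff_of_adj {u v : V} : u ∈ R ∪ Y → v ∈ R ∪ Y → G.Adj u v → (u ∈ M ↔ v ∈ M)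
  mem_iff_of_mem_edge {u : V} {e : Sym2 V} : u ∈ R ∪ Y → e ∈ E → u ∈ e → (u ∈ M ↔ e ∈ F)
  edge_mem_iff {v : V} {e f : Sym2 V} : e ∈ E → f ∈ E → v ∈ e → v ∈ f → (e ∈ F ↔ f ∈ F)
  mem_iff_of_common_neighbor {u v w : V} :
    u ∈ R → v ∈ R → G.Adj u w → G.Adj v w → (u ∈ M ↔ v ∈ M)
  mem_iff_of_adj_edge {u v : V} {e : Sym2 V} :
    u ∈ R → G.Adj u v → e ∈ E → v ∈ e → (u ∈ M ↔ e ∈ F)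

/-- Every coloured object seen from `x` (the vertex `x`, the edges of `E` at `x`, the neighbours of
`x` in `R`) is marked. This is the invariant propagated along the edges of `linkGraph`. -/
structure IsSaturatedAt (G : SimpleGraph V) (R Y : Set V) (E : Set (Sym2 V))
    (M : Set V) (F : Set (Sym2 V)) (x : V) : Prop where
  mem_of_colored : x ∈ R ∪ Y → x ∈ M
  edge_mem {e : Sym2 V} : e ∈ E → x ∈ e → e ∈ F
  neighbor_mem {u : V} : u ∈ R → G.Adj u x → u ∈ M

namespace IsCoherentMarking

variable {G : SimpleGraph V} {R Y M : Set V} {E F : Set (Sym2 V)} {x y u : V} {e : Sym2 V}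

theorem union_of_disjoint {Rs Ys : Set V} (hRY : Disjoint R Y)
    (hRs : Rs ⊆ R) (hYs : Ys ⊆ Y) (hF : F ⊆ E)
    (adj : ∀ u v, u ∈ R ∪ Y → v ∈ R ∪ Y → G.Adj u v → (u ∈ Rs ∪ Ys ↔ v ∈ Rs ∪ Ys))
    (incident : ∀ u v, u ∈ R ∪ Y → s(u, v) ∈ E → (u ∈ Rs ∪ Ys ↔ s(u, v) ∈ F))
    (edges : ∀ u v w, s(u, v) ∈ E → s(v, w) ∈ E → (s(u, v) ∈ F ↔ s(v, w) ∈ F))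
    (common_neighbor : ∀ u v, u ≠ v → u ∈ R → v ∈ R → (∃ w, G.Adj u w ∧ G.Adj v w) →
      (u ∈ Rs ↔ v ∈ Rs))
    (adj_edge : ∀ u v w, u ∈ R → G.Adj u v → s(v, w) ∈ E → (u ∈ Rs ↔ s(v, w) ∈ F)) :
    IsCoherentMarking G R Y E (Rs ∪ Ys) F where
  vertices_subset := Set.union_subset_union hRs hYs
  edges_subset := hF
  mem_iff_of_adj := adj _ _
  mem_iff_of_mem_edge := by
    rintro u _ hu he ⟨v, rfl⟩
    exact incident u v hu he
  edge_mem_iff := by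
    rintro v _ _ he hf ⟨u, rfl⟩ ⟨w, rfl⟩
    rw [Sym2.eq_swap] at he ⊢
    exact edges u v w he hf
  mem_iff_of_common_neighbor {u v w} hu hv huw hvw := by
    obtain rfl | huv := eq_or_ne u v
    · rfl
    · rw [mem_union_iff_left_of_disjoint hRY hYs hu, mem_union_iff_left_of_disjoint hRY hYs hv,
        common_neighbor u v huv hu hv ⟨w, huw, hvw⟩]
  mem_iff_of_adj_edge := by
    rintro u v _ hu huv he ⟨w, rfl⟩
    rw [mem_union_iff_left_of_disjoint hRY hYs hu, adj_edge u v w hu huv he]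

theorem isSaturatedAt_of_mem (h : IsCoherentMarking G R Y E M F) (hx : x ∈ M) :
    IsSaturatedAt G R Y E M F x where
  mem_of_colored _ := hx
  edge_mem he hxe := (h.mem_iff_of_mem_edge (h.vertices_subset hx) he hxe).1 hx
  neighbor_mem hu hux := (h.mem_iff_of_adj (.inl hu) (h.vertices_subset hx) hux).2 hx

theorem isSaturatedAt_of_mem_edge (h : IsCoherentMarking G R Y E M F) (he : e ∈ F) (hx : x ∈ e) :
    IsSaturatedAt G R Y E M F x where
  mem_of_colored hxc := (h.mem_iff_of_mem_edge hxc (h.edges_subset he) hx).2 he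
  edge_mem hf hxf := (h.edge_mem_iff (h.edges_subset he) hf hx hxf).1 he
  neighbor_mem hu hux := (h.mem_iff_of_adj_edge hu hux (h.edges_subset he) hx).2 he

theorem isSaturatedAt_of_neighbor_mem (h : IsCoherentMarking G R Y E M F)
    (huR : u ∈ R) (huM : u ∈ M) (hux : G.Adj u x) : IsSaturatedAt G R Y E M F x where
  mem_of_colored hxc := (h.mem_iff_of_adj (.inl huR) hxc hux).1 huM
  edge_mem he hxe := (h.mem_iff_of_adj_edge huR hux he hxe).1 huM
  neighbor_mem hv hvx := (h.mem_iff_of_common_neighbor huR hv hux hvx).1 huM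

theorem isSaturatedAt_of_linkGraph_adj (h : IsCoherentMarking G R Y E M F)
    (hx : IsSaturatedAt G R Y E M F x) (hxy : (linkGraph G R Y E).Adj x y) :
    IsSaturatedAt G R Y E M F y := by
  obtain ⟨(hE | ⟨hG, u, hu, hue⟩) | ⟨hG, hY⟩, -⟩ := (SimpleGraph.fromEdgeSet_adj _).1 hxy
  · exact h.isSaturatedAt_of_mem_edge (hx.edge_mem hE (Sym2.mem_mk_left x y))
      (Sym2.mem_mk_right x y)
  · have hadj : G.Adj x y := hG
    obtain rfl | rfl := Sym2.mem_iff.1 hue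
    · exact h.isSaturatedAt_of_neighbor_mem hu (hx.mem_of_colored (.inl hu)) hadj
    · exact h.isSaturatedAt_of_mem (hx.neighbor_mem hu hadj.symm)
  · have hxY : x ∈ R ∪ Y := .inr (hY x (Sym2.mem_mk_left x y))
    have hyY : y ∈ R ∪ Y := .inr (hY y (Sym2.mem_mk_right x y))
    exact h.isSaturatedAt_of_mem ((h.mem_iff_of_adj hxY hyY hG).1 (hx.mem_of_colored hxY))

theorem isSaturatedAt_of_reachable (h : IsCoherentMarking G R Y E M F)
    (hx : IsSaturatedAt G R Y E M F x) (hxy : (linkGraph G R Y E).Reachable x y) :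
    IsSaturatedAt G R Y E M F y := by
  obtain ⟨p⟩ := hxy
  induction p with
  | nil => exact hx
  | cons hadj _ ih => exact ih (h.isSaturatedAt_of_linkGraph_adj hx hadj)

theorem isSaturatedAt_of_connectedComponent (h : IsCoherentMarking G R Y E M F)
    {C : (linkGraph G R Y E).ConnectedComponent}
    (hC : (∃ x ∈ C.supp, x ∈ M) ∨ ∃ e ∈ F, ∀ x ∈ e, x ∈ C.supp) (hy : y ∈ C.supp) :
    IsSaturatedAt G R Y E M F y := by
  obtain ⟨x, hxC, hx⟩ : ∃ x ∈ C.supp, IsSaturatedAt G R Y E M F x := by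
    obtain ⟨x, hxC, hxM⟩ | ⟨e, he, heC⟩ := hC
    · exact ⟨x, hxC, h.isSaturatedAt_of_mem hxM⟩
    · have hxe := e.out_fst_mem
      exact ⟨_, heC _ hxe, h.isSaturatedAt_of_mem_edge he hxe⟩
  exact h.isSaturatedAt_of_reachable hx (C.reachable_of_mem_supp hxC hy)

end IsCoherentMarking

end Marking

theorem components_of_marked_graph_fully_marked
    {V : Type*} (G : SimpleGraph V)
    (Rv Yv Bv : Set V) (Re Be : Set (Sym2 V))
    (hvcover : Rv ∪ Yv ∪ Bv = Set.univ)
    (hRY : Disjoint Rv Yv) (hRB : Disjoint Rv Bv) (hYB : Disjoint Yv Bv)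
    (hecover : Re ∪ Be = G.edgeSet) (heDisj : Disjoint Re Be)
    (L : Set (Sym2 V))
    (hL : L = Re ∪ {e ∈ G.edgeSet | ∃ u ∈ Rv, u ∈ e} ∪
      {e ∈ G.edgeSet | ∀ u ∈ e, u ∈ Yv})
    (Rs Ys : Set V) (Res : Set (Sym2 V))
    (hRs : Rs ⊆ Rv) (hYs : Ys ⊆ Yv) (hRes : Res ⊆ Re)
    (h3 : ∀ u v : V, u ∈ Rv ∪ Yv → v ∈ Rv ∪ Yv → G.Adj u v →
      (u ∈ Rs ∪ Ys ↔ v ∈ Rs ∪ Ys))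
    (h4 : ∀ u v : V, u ∈ Rv ∪ Yv → s(u, v) ∈ Re → (u ∈ Rs ∪ Ys ↔ s(u, v) ∈ Res))
    (h5 : ∀ u v w : V, s(u, v) ∈ Re → s(v, w) ∈ Re → (s(u, v) ∈ Res ↔ s(v, w) ∈ Res))
    (h6 : ∀ u v : V, u ≠ v → u ∈ Rv → v ∈ Rv → (∃ w, G.Adj u w ∧ G.Adj v w) →
      (u ∈ Rs ↔ v ∈ Rs))
    (h7 : ∀ u v w : V, u ∈ Rv → G.Adj u v → s(v, w) ∈ Re → (u ∈ Rs ↔ s(v, w) ∈ Res)) :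
    ∀ C : (SimpleGraph.fromEdgeSet L).ConnectedComponent,
      ((∃ x : V, (SimpleGraph.fromEdgeSet L).connectedComponentMk x = C ∧
          (∃ e ∈ L, x ∈ e) ∧ x ∈ Rs ∪ Ys) ∨
        (∃ e ∈ Res, ∀ x ∈ e, (SimpleGraph.fromEdgeSet L).connectedComponentMk x = C)) →
      ((∀ x : V, (SimpleGraph.fromEdgeSet L).connectedComponentMk x = C →
          (∃ e ∈ L, x ∈ e) → ((x ∈ Rv → x ∈ Rs) ∧ (x ∈ Yv → x ∈ Ys))) ∧
        (∀ e ∈ Re, e ∈ L →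
          (∀ x ∈ e, (SimpleGraph.fromEdgeSet L).connectedComponentMk x = C) →
          e ∈ Res)) := by
  subst hL
  intro C hC
  have coherent : IsCoherentMarking G Rv Yv Re (Rs ∪ Ys) Res :=
    .union_of_disjoint hRY hRs hYs hRes h3 h4 h5 h6 h7
  have saturated {y : V} (hy : y ∈ C.supp) : IsSaturatedAt G Rv Yv Re (Rs ∪ Ys) Res y :=
    coherent.isSaturatedAt_of_connectedComponent
      (hC.imp_left fun ⟨x, hxC, _, hx⟩ => ⟨x, hxC, hx⟩) hy
  refine ⟨fun y hy _ => ⟨fun hyR => ?_, fun hyY => ?_⟩, fun e he _ heC => ?_⟩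
  · exact (mem_union_iff_left_of_disjoint hRY hYs hyR).1 ((saturated hy).mem_of_colored (.inl hyR))
  · exact (mem_union_iff_left_of_disjoint hRY.symm hRs hyY).1
      ((saturated hy).mem_of_colored (.inr hyY)).symm
  · exact (saturated (heC _ e.out_fst_mem)).edge_mem he e.out_fst_mem
end
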